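/- Let R be a brace algebra, ⋆ the Loday–Ronco product on T(R), and ⋆ also the Loday–Ronco product on decorated forests T(R^𝒯) induced by the recursive brace operation M(B_+^x(f_1); f_2) = B_+^x(f_1 ⋆ f_2) on decorated trees. With ι(x_1⋯x_n) = B_+^{x_1}(1)⋯B_+^{x_n}(1) and μ defined by μ(1)=1, μ(t_1⋯t_n)=μ(t_1)⋯μ(t_n), μ(B_+^x(s_1⋯s_q)) = M_{1q}(x; μ(s_1)⋯μ(s_q)), one has X ⋆ Y = μ(ι(X) ⋆ ι(Y)) for all X, Y ∈ T(R). -/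

import Mathlib

/-! Setup: a brace algebra `R`, the Loday–Ronco product on `T(R)` (realized in
the tensor algebra), `R`-decorated planar rooted trees with their recursive
brace operation and the induced Loday–Ronco product on decorated forests, and
the maps `ι : T(R) → T(R^𝒯)` and `μ : T(R^𝒯) → T(R)`. -/

/-- Planar rooted trees with vertices decorated by elements of `R`. -/
inductive PTree (R : Type*) : Type _
  | node : R → List (PTree R) → PTree R

section

variable (K : Type*) [Field K] {R : Type*} [AddCommGroup R] [Module K R]

/-- All splittings of a list into a prefix and a suffix. -/
def splits {α : Type*} (l : List α) : List (List α × List α) :=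
  (List.range (l.length + 1)).map fun i => (l.take i, l.drop i)

/-- All factorizations of a list into `k` (possibly empty) consecutive factors. -/
def splitsN {α : Type*} : ℕ → List α → List (List (List α))
  | 0, l => if l.isEmpty then [[]] else []
  | k + 1, l => (splits l).flatMap fun p => (splitsN k p.2).map fun r => p.1 :: r

variable {K}

/-- The word on the right-hand side of the brace relation, for a factorization
of `zs` into `2n+1` consecutive (possibly empty) blocks braced into `ys`. -/
def braceRHSword (M : R → List R → R) : List (List R) → List R → List R
  | [P], [] => P
  | P :: B :: rest, y :: ys => P ++ M y B :: braceRHSword M rest ys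
  | _, _ => []

/-- The brace relation for operations `{x; y₁,…,y_q} = M(x; y₁⋯y_q)`. -/
def BraceRel (M : R → List R → R) : Prop :=
  ∀ (x : R) (ys zs : List R),
    M (M x ys) zs =
      ((splitsN (2 * ys.length + 1) zs).map fun Zs => M x (braceRHSword M Zs ys)).sum

/-- The extension `M(X;Y)` of the brace operations to pairs of words. -/
def Mext (M : R → List R → R) : List R → List R → R
  | [], [] => 0
  | [], [y] => y
  | [], _ :: _ :: _ => 0
  | [x], ys => M x ys
  | _ :: _ :: _, _ => 0

/-- The list of words (with multiplicities) whose formal sum is the Loday–Ronco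
product `X ⋆ Y` in `T(R)` (with `1 ⋆ 1 = 1`; terms with `k > |X| + |Y|` vanish). -/
def starWords (M : R → List R → R) : List R → List R → List (List R)
  | [], [] => [[]]
  | X, Y =>
    (List.range (X.length + Y.length)).flatMap fun k =>
      (splitsN (k + 1) X).flatMap fun Xs =>
        (splitsN (k + 1) Y).map fun Ys => List.zipWith (Mext M) Xs Ys

variable (K)

/-- A word `x₁⋯xₙ ∈ R^{⊗n} ⊂ T(R)`, realized in the tensor algebra. -/
def wd (l : List R) : TensorAlgebra K R :=
  (l.map fun x => TensorAlgebra.ι K x).prod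

/-- The Loday–Ronco product `⋆` on `T(R)`, evaluated on two words. -/
def starW (M : R → List R → R) (X Y : List R) : TensorAlgebra K R :=
  ((starWords M X Y).map (wd K)).sum

/-- Decorated forests: words of decorated trees. -/
abbrev Forest (R : Type*) := List (PTree R)

/-- The space `R^𝒯` spanned by the decorated trees. -/
abbrev TreeMod (R : Type*) := PTree R →₀ K

/-- The space `T(R^𝒯)` of decorated forests. -/
abbrev ForestMod (R : Type*) := Forest R →₀ K

variable {K}

/-- `B₊ˣ` : grafting of a decorated forest onto a new root decorated by `x`. -/
def Bplus (x : R) (f : Forest R) : PTree R := PTree.node x f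

/-- The element of `T(R^𝒯)` obtained from a word whose letters are linear
combinations of decorated trees, expanding multilinearly. -/
noncomputable def wordOf : List (TreeMod K R) → ForestMod K R
  | [] => Finsupp.single ([] : Forest R) 1
  | a :: rest => a.sum fun t c => c • Finsupp.mapDomain (List.cons t) (wordOf rest)

/-- Extension of the tree brace operation to pairs of forests. -/
noncomputable def MextF (Mh : PTree R → Forest R → TreeMod K R) :
    Forest R → Forest R → TreeMod K R
  | [], [] => 0
  | [], [s] => Finsupp.single s 1
  | [], _ :: _ :: _ => 0
  | [t], ys => Mh t ys
  | _ :: _ :: _, _ => 0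

/-- The Loday–Ronco product on decorated forests built from a brace operation
`Mh` on decorated trees. -/
noncomputable def starRHS (Mh : PTree R → Forest R → TreeMod K R) :
    Forest R → Forest R → ForestMod K R
  | [], [] => Finsupp.single ([] : Forest R) 1
  | X, Y =>
    ((List.range (X.length + Y.length)).flatMap fun k =>
      (splitsN (k + 1) X).flatMap fun Xs =>
        (splitsN (k + 1) Y).map fun Ys =>
          wordOf (List.zipWith (MextF Mh) Xs Ys)).sum

/-- `Mh` and `star` satisfy the defining recursion of the brace operation on
decorated trees, `M(B₊ˣ(f₁); f₂) = B₊ˣ(f₁ ⋆ f₂)`, where `⋆` is the Loday–Ronco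
product on decorated forests built from `Mh`. -/
def IsTreeBrace (Mh : PTree R → Forest R → TreeMod K R)
    (star : Forest R → Forest R → ForestMod K R) : Prop :=
  (∀ (x : R) (f₁ f₂ : Forest R),
      Mh (Bplus x f₁) f₂ = Finsupp.mapDomain (Bplus x) (star f₁ f₂)) ∧
  (∀ X Y : Forest R, star X Y = starRHS Mh X Y)

/-- The map `μ` on decorated trees: `μ(B₊ˣ(s₁⋯s_q)) = M_{1q}(x; μ(s₁)⋯μ(s_q))`. -/
def muT (M : R → List R → R) : PTree R → R
  | PTree.node x ts => M x (ts.attach.map fun s => muT M s.1)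
decreasing_by
  have := List.sizeOf_lt_of_mem s.2
  simp only [PTree.node.sizeOf_spec]
  omega

/-- The map `ι : T(R) → T(R^𝒯)`, `ι(x₁⋯xₙ) = B₊^{x₁}(1)⋯B₊^{xₙ}(1)`, on words. -/
def iotaW (xs : List R) : Forest R := xs.map fun x => PTree.node x []

end

/-! The unit law `1 ⋆ F = F` for forests gives `M(B₊ˣ(1); F) = B₊ˣ(F)`, and
`μ(B₊ˣ(ι(Y))) = M(x; Y)`. Hence `μ` carries the extended brace `M(ι(A); ι(B))` to `M(A; B)` for all
words `A`, `B`. Since `ι` maps the factorizations of a word bijectively onto those of its image, and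
`μ` is multiplicative, `μ` matches `ι(X) ⋆ ι(Y)` with `X ⋆ Y` term by term. -/

section Splittings

variable {α β : Type*}

theorem splits_nil : splits ([] : List α) = [([], [])] := by
  simp [splits]

theorem splits_cons (a : α) (l : List α) :
    splits (a :: l) = ([], a :: l) :: (splits l).map fun p => (a :: p.1, p.2) := by
  simp [splits, List.range_succ_eq_map]

theorem splits_map (f : α → β) (l : List α) :
    splits (l.map f) = (splits l).map fun p => (p.1.map f, p.2.map f) := by
  simp [splits]

theorem splitsN_nil (k : ℕ) : splitsN k ([] : List α) = [List.replicate k []] := by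
  induction k with
  | zero => simp [splitsN]
  | succ k ih => simp [splitsN, splits_nil, ih, List.replicate_succ]

theorem splitsN_map (f : α → β) (k : ℕ) (l : List α) :
    splitsN k (l.map f) = (splitsN k l).map (List.map (List.map f)) := by
  induction k generalizing l with
  | zero => cases l <;> simp [splitsN]
  | succ k ih =>
    simp [splitsN, splits_map, ih, List.flatMap_map, List.map_flatMap, Function.comp_def]

theorem length_of_mem_splitsN {k : ℕ} {l : List α} {Ls : List (List α)} (h : Ls ∈ splitsN k l) :
    Ls.length = k := by
  induction k generalizing l Ls with
  | zero => cases l <;> simp_all [splitsN]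
  | succ k ih =>
    simp only [splitsN, List.mem_flatMap, List.mem_map] at h
    obtain ⟨p, -, Ls', hLs', rfl⟩ := h
    simp [ih hLs']

theorem sum_map_splitsN_succ {N : Type*} [AddCommMonoid N] (φ : List (List α) → N) (k : ℕ)
    (l : List α) :
    ((splitsN (k + 1) l).map φ).sum =
      ((splits l).map fun p => ((splitsN k p.2).map fun Ls => φ (p.1 :: Ls)).sum).sum := by
  simp [splitsN, List.flatMap_def, List.sum_flatten, Function.comp_def]

theorem sum_map_splitsN_eq_ite {N : Type*} [AddCommMonoid N] (φ : List (List α) → N)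
    (hφ : ∀ Ls, ∀ B ∈ Ls, B.length ≠ 1 → φ Ls = 0) (k : ℕ) (l : List α) :
    ((splitsN k l).map φ).sum = if k = l.length then φ (l.map ([·])) else 0 := by
  induction k generalizing l φ with
  | zero => cases l <;> simp [splitsN]
  | succ k ih =>
    have hφ_head (B : List α) (hB : B.length ≠ 1) (Ls) : φ (B :: Ls) = 0 :=
      hφ _ B List.mem_cons_self hB
    have hφ_tail (B : List α) : ∀ Ls, ∀ B' ∈ Ls, B'.length ≠ 1 → φ (B :: Ls) = 0 :=
      fun Ls B' hB' => hφ _ B' (List.mem_cons_of_mem B hB')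
    rw [sum_map_splitsN_succ]
    match l with
    | [] => simp [splits_nil, hφ_head]
    | [a] => simp [splits_nil, splits_cons, hφ_head, ih _ (hφ_tail _)]
    | a :: b :: l => simp [splits_cons, hφ_head, Function.comp_def, ih _ (hφ_tail _)]

end Splittings

section Forests

variable {K : Type*} [Field K] {R : Type*}

theorem wordOf_eq_zero_of_zero_mem {l : List (TreeMod K R)} (h : 0 ∈ l) : wordOf l = 0 := by
  induction l with
  | nil => simp at h
  | cons a l ih =>
    rcases List.mem_cons.mp h with rfl | h
    · simp [wordOf]
    · simp [wordOf, ih h]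

theorem wordOf_map_single (F : Forest R) :
    wordOf (F.map fun t => Finsupp.single t (1 : K)) = Finsupp.single F 1 := by
  induction F with
  | nil => rfl
  | cons t F ih => simp [wordOf, ih, Finsupp.mapDomain_single]

theorem MextF_nil_left_of_length_ne_one (Mh : PTree R → Forest R → TreeMod K R) {F : Forest R}
    (hF : F.length ≠ 1) : MextF Mh [] F = 0 := by
  match F with
  | [] => rfl
  | [_] => exact absurd rfl hF
  | _ :: _ :: _ => rfl

theorem sum_splitsN_wordOf_MextF_nil (Mh : PTree R → Forest R → TreeMod K R) (k : ℕ)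
    (F : Forest R) :
    ((splitsN k F).map fun Ys => wordOf (List.zipWith (MextF Mh) (List.replicate k []) Ys)).sum =
      if k = F.length then Finsupp.single F 1 else 0 := by
  have hzip : ∀ Ys ∈ splitsN k F,
      List.zipWith (MextF Mh) (List.replicate k []) Ys = Ys.map (MextF Mh []) := by
    intro Ys hYs
    rw [← length_of_mem_splitsN hYs, ← List.map_const', List.zipWith_map_left, List.zipWith_self]
  have hvanish : ∀ Ys : List (Forest R), ∀ B ∈ Ys, B.length ≠ 1 →
      wordOf (Ys.map (MextF Mh [])) = 0 := fun Ys B hB hlen =>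
    wordOf_eq_zero_of_zero_mem
      (List.mem_map.mpr ⟨B, hB, MextF_nil_left_of_length_ne_one Mh hlen⟩)
  rw [List.map_congr_left fun Ys hYs => congrArg wordOf (hzip Ys hYs),
    sum_map_splitsN_eq_ite _ hvanish, List.map_map]
  exact congrArg (if k = F.length then · else 0) (wordOf_map_single F)

theorem starRHS_nil_left (Mh : PTree R → Forest R → TreeMod K R) (F : Forest R) :
    starRHS Mh [] F = Finsupp.single F 1 := by
  match F with
  | [] => rfl
  | t :: F =>
    have hshort : ((List.range F.length).map fun k =>
        if k = F.length then Finsupp.single (t :: F) (1 : K) else 0).sum = 0 :=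
      List.sum_eq_zero fun f hf => by
        obtain ⟨k, hk, rfl⟩ := List.mem_map.mp hf
        exact if_neg (List.mem_range.mp hk).ne
    simp [starRHS, splitsN_nil, List.flatMap_def, List.sum_flatten, Function.comp_def,
      sum_splitsN_wordOf_MextF_nil, List.range_succ, hshort]

theorem IsTreeBrace.brace_Bplus_nil {Mh : PTree R → Forest R → TreeMod K R}
    {starT : Forest R → Forest R → ForestMod K R} (h : IsTreeBrace Mh starT) (x : R)
    (F : Forest R) : Mh (Bplus x []) F = Finsupp.single (Bplus x F) 1 := by
  rw [h.1, h.2, starRHS_nil_left, Finsupp.mapDomain_single]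

end Forests

section Mu

variable {R : Type*}

theorem muT_Bplus (M : R → List R → R) (x : R) (F : Forest R) :
    muT M (Bplus x F) = M x (F.map (muT M)) := by
  rw [Bplus, muT, List.attach_map_val (f := muT M)]

theorem map_muT_iotaW {M : R → List R → R} (hM0 : ∀ x, M x [] = x) (X : List R) :
    (iotaW X).map (muT M) = X := by
  have hroot (x : R) : muT M (PTree.node x []) = x := (muT_Bplus M x []).trans (hM0 x)
  simp [iotaW, hroot, Function.comp_def]

variable (K : Type*) [Field K] [AddCommGroup R] [Module K R]

/-- The linear extension `R^𝒯 → R` of `μ` on decorated trees, which evaluates words of linear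
combinations of trees letter by letter. -/
noncomputable def muTree (M : R → List R → R) : TreeMod K R →ₗ[K] R :=
  Finsupp.linearCombination K (muT M)

/-- The map `μ : T(R^𝒯) → T(R)`, the linear extension of `t₁⋯tₙ ↦ μ(t₁)⋯μ(tₙ)`. -/
noncomputable def muForest (M : R → List R → R) : ForestMod K R →ₗ[K] TensorAlgebra K R :=
  Finsupp.linearCombination K fun F => wd K (F.map (muT M))

variable {K}

theorem wd_cons (x : R) (X : List R) : wd K (x :: X) = TensorAlgebra.ι K x * wd K X := by
  simp [wd]

theorem muForest_mapDomain_cons (M : R → List R → R) (t : PTree R) (f : ForestMod K R) :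
    muForest K M (Finsupp.mapDomain (List.cons t) f) =
      TensorAlgebra.ι K (muT M t) * muForest K M f := by
  induction f using Finsupp.induction_linear with
  | zero => simp
  | add f g hf hg => rw [Finsupp.mapDomain_add, map_add, hf, hg, map_add, mul_add]
  | single F c => simp [muForest, Finsupp.mapDomain_single, wd_cons]

theorem muForest_wordOf (M : R → List R → R) (l : List (TreeMod K R)) :
    muForest K M (wordOf l) = wd K (l.map (muTree K M)) := by
  induction l with
  | nil => simp [muForest, wordOf]
  | cons a l ih =>
    rw [List.map_cons, wd_cons, ← ih, wordOf, muTree, Finsupp.linearCombination_apply,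
      map_finsuppSum, map_finsuppSum, Finsupp.sum_mul]
    simp only [map_smul, muForest_mapDomain_cons, smul_mul_assoc]

variable {M : R → List R → R} (hM0 : ∀ x, M x [] = x) {Mh : PTree R → Forest R → TreeMod K R}
  (hMh : ∀ x F, Mh (Bplus x []) F = Finsupp.single (Bplus x F) 1)
include hM0 hMh

theorem muTree_MextF_iotaW (A B : List R) :
    muTree K M (MextF Mh (iotaW A) (iotaW B)) = Mext M A B := by
  match A, B with
  | [], [] => simp [iotaW, MextF, Mext]
  | [], [y] => simpa [iotaW, MextF, Mext, muTree] using map_muT_iotaW hM0 [y]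
  | [], _ :: _ :: _ => simp [iotaW, MextF, Mext]
  | _ :: _ :: _, _ => simp [iotaW, MextF, Mext]
  | [x], Y =>
    calc muTree K M (MextF Mh (iotaW [x]) (iotaW Y))
      _ = muTree K M (Mh (Bplus x []) (iotaW Y)) := by simp [iotaW, MextF, Bplus]
      _ = muT M (Bplus x (iotaW Y)) := by simp [hMh, muTree]
      _ = M x Y := by rw [muT_Bplus, map_muT_iotaW hM0]
      _ = Mext M [x] Y := by simp [Mext]

theorem muForest_wordOf_zipWith_MextF_iotaW (Xs Ys : List (List R)) :
    muForest K M (wordOf (List.zipWith (MextF Mh) (Xs.map iotaW) (Ys.map iotaW))) =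
      wd K (List.zipWith (Mext M) Xs Ys) := by
  simp only [muForest_wordOf, List.zipWith_map, List.map_zipWith, muTree_MextF_iotaW hM0 hMh]

theorem muForest_starRHS_iotaW (X Y : List R) :
    muForest K M (starRHS Mh (iotaW X) (iotaW Y)) = starW K M X Y := by
  have hlen (Z : List R) : (iotaW Z).length = Z.length := List.length_map _
  have hsplits (k : ℕ) (Z : List R) : splitsN k (iotaW Z) = (splitsN k Z).map (List.map iotaW) :=
    splitsN_map _ k Z
  by_cases hXY : X = [] → Y = [] → False
  · have hιXY : iotaW X = [] → iotaW Y = [] → False := by simpa [iotaW] using hXY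
    -- `hXY` and `hιXY` select the second clauses of `starWords` and `starRHS`.
    simp only [starRHS, starW, starWords, hsplits, hlen, map_list_sum, List.map_flatMap,
      List.flatMap_map, List.map_map, Function.comp_def,
      muForest_wordOf_zipWith_MextF_iotaW hM0 hMh]
  · obtain ⟨rfl, rfl⟩ : X = [] ∧ Y = [] := by simpa using hXY
    simp [iotaW, starRHS, starW, starWords, muForest]

end Mu

theorem star_eq_mu_star_iota_general
    (K : Type*) [Field K] {R : Type*} [AddCommGroup R] [Module K R]
    (M : R → List R → R)
    (hM0 : ∀ x : R, M x [] = x)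
    (Mh : PTree R → Forest R → TreeMod K R)
    (starT : Forest R → Forest R → ForestMod K R)
    (h : IsTreeBrace Mh starT) (X Y : List R) :
    starW K M X Y =
      (starT (iotaW X) (iotaW Y)).sum fun g c => c • wd K (g.map (muT M)) := by
  rw [h.2, ← muForest_starRHS_iotaW hM0 h.brace_Bplus_nil, muForest,
    Finsupp.linearCombination_apply]

/-- Let `R` be a brace algebra, `⋆` the Loday–Ronco product on
`T(R)`, and `⋆` also the Loday–Ronco product on decorated forests `T(R^𝒯)`
induced by the recursive brace operation `M(B₊ˣ(f₁); f₂) = B₊ˣ(f₁ ⋆ f₂)` on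
decorated trees.  With `ι(x₁⋯xₙ) = B₊^{x₁}(1)⋯B₊^{xₙ}(1)` and `μ` defined by
`μ(1) = 1`, `μ(t₁⋯tₙ) = μ(t₁)⋯μ(tₙ)`, `μ(B₊ˣ(s₁⋯s_q)) = M_{1q}(x; μ(s₁)⋯μ(s_q))`,
one has `X ⋆ Y = μ(ι(X) ⋆ ι(Y))` for all `X, Y ∈ T(R)`. -/
theorem star_eq_mu_star_iota
    (K : Type*) [Field K] {R : Type*} [AddCommGroup R] [Module K R]
    (M : R → List R → R)
    (hM0 : ∀ x : R, M x [] = x)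
    (hadd₁ : ∀ (a b : R) (ys : List R), M (a + b) ys = M a ys + M b ys)
    (hsmul₁ : ∀ (c : K) (a : R) (ys : List R), M (c • a) ys = c • M a ys)
    (hadd₂ : ∀ (x : R) (p s : List R) (a b : R),
      M x (p ++ (a + b) :: s) = M x (p ++ a :: s) + M x (p ++ b :: s))
    (hsmul₂ : ∀ (x : R) (p s : List R) (c : K) (a : R),
      M x (p ++ (c • a) :: s) = c • M x (p ++ a :: s))
    (hbrace : BraceRel M)
    (Mh : PTree R → Forest R → TreeMod K R)
    (starT : Forest R → Forest R → ForestMod K R)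
    (h : IsTreeBrace Mh starT) :
    ∀ X Y : List R,
      starW K M X Y =
        (starT (iotaW X) (iotaW Y)).sum fun g c => c • wd K (g.map (muT M)) :=
  star_eq_mu_star_iota_general K M hM0 Mh starT h
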